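/- Let ε = max_{s∈S, a∈A} |A^π(s,a)| and Δ = max_{s∈S} D_TV(π̃(·|s) ‖ π(·|s)). Then for any two policies π and π̃, | η(π̃) − η(π) − L_π(π̃) | ≤ (4 ε γ / (1−γ)²) · Δ². -/

import Mathlib

open scoped BigOperators

namespace PolicyOpt

/-- A finite Markov decision process. -/
structure MDP (S A : Type*) [Fintype S] [Fintype A] where
  p : S → A → S → ℝ
  r : S → A → ℝ
  γ : ℝ
  μ0 : S → ℝ
  p_nonneg : ∀ s a s', 0 ≤ p s a s'
  p_sum_one : ∀ s a, ∑ s', p s a s' = 1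
  μ0_nonneg : ∀ s, 0 ≤ μ0 s
  μ0_sum_one : ∑ s, μ0 s = 1
  γ_pos : 0 < γ
  γ_lt_one : γ < 1

variable {S A : Type*} [Fintype S] [Fintype A] [DecidableEq S] [DecidableEq A]

/-- A policy assigns to every state a probability distribution over actions. -/
def IsPolicy (π : S → A → ℝ) : Prop :=
  (∀ s a, 0 ≤ π s a) ∧ ∀ s, ∑ a, π s a = 1

/-- Trajectory prefixes (histories) consisting of `t+1` state-action pairs. -/
abbrev Hist (S A : Type*) (t : ℕ) := Fin (t + 1) → S × A

/-- Probability of a history of length `t+1` when following policy `π`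
starting from the initial distribution `μ0`. -/
noncomputable def prob (M : MDP S A) (π : S → A → ℝ) (t : ℕ) (h : Hist S A t) : ℝ :=
  (M.μ0 (h 0).1 * π (h 0).1 (h 0).2) *
    ∏ i : Fin t,
      (M.p (h i.castSucc).1 (h i.castSucc).2 (h i.succ).1 * π (h i.succ).1 (h i.succ).2)

/-- Probability of a history of length `t+1` when following policy `π`,
conditioned on starting in state `s` with first action `a`. -/
noncomputable def probFrom (M : MDP S A) (π : S → A → ℝ) (s : S) (a : A) (t : ℕ) (h : Hist S A t) : ℝ :=
  (if h 0 = (s, a) then (1 : ℝ) else 0) *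
    ∏ i : Fin t,
      (M.p (h i.castSucc).1 (h i.castSucc).2 (h i.succ).1 * π (h i.succ).1 (h i.succ).2)

/-- The last state-action pair of a history. -/
def lastSA {t : ℕ} (h : Hist S A t) : S × A := h (Fin.last t)

/-- State-action value `Q^π(s,a) = E_{τ∼π}[∑_{t≥0} γ^t r(s_t,a_t) | s₀=s, a₀=a]`. -/
noncomputable def Qval (M : MDP S A) (π : S → A → ℝ) (s : S) (a : A) : ℝ :=
  ∑' t : ℕ, M.γ ^ t * ∑ h : Hist S A t, probFrom M π s a t h * M.r (lastSA h).1 (lastSA h).2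

/-- State value `V^π(s)`. -/
noncomputable def Vval (M : MDP S A) (π : S → A → ℝ) (s : S) : ℝ :=
  ∑ a, π s a * Qval M π s a

/-- Advantage `A^π(s,a) = Q^π(s,a) - V^π(s)`. -/
noncomputable def Adv (M : MDP S A) (π : S → A → ℝ) (s : S) (a : A) : ℝ :=
  Qval M π s a - Vval M π s

/-- The value `η(π) = E_{τ∼π} ∑_{t≥0} γ^t r(s_t,a_t)`. -/
noncomputable def ηval (M : MDP S A) (π : S → A → ℝ) : ℝ :=
  ∑' t : ℕ, M.γ ^ t * ∑ h : Hist S A t, prob M π t h * M.r (lastSA h).1 (lastSA h).2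

/-- Normalised discounted state occupancy measure
`d^π(s) = (1-γ) ∑_{t≥0} γ^t Pr_{τ∼π}(s_t = s)`. -/
noncomputable def dOcc (M : MDP S A) (π : S → A → ℝ) (s : S) : ℝ :=
  (1 - M.γ) * ∑' t : ℕ, M.γ ^ t *
    ∑ h : Hist S A t, prob M π t h * (if (lastSA h).1 = s then (1 : ℝ) else 0)

/-- The surrogate objective `L_π(π') = (1/(1-γ)) ∑_s d^π(s) ∑_a π'(a|s) A^π(s,a)`. -/
noncomputable def Lsur (M : MDP S A) (π π' : S → A → ℝ) : ℝ :=
  (1 - M.γ)⁻¹ * ∑ s, dOcc M π s * ∑ a, π' s a * Adv M π s a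

/-- Product of importance sampling ratios `ρ_{0:t}` along a history. -/
noncomputable def ρprod (π π' : S → A → ℝ) {t : ℕ} (h : Hist S A t) : ℝ :=
  ∏ i, π' (h i).1 (h i).2 / π (h i).1 (h i).2

/-- Smoothed product of importance sampling ratios `ρ^{α}_{0:t}`. -/
noncomputable def ρpow (π π' : S → A → ℝ) {t : ℕ} (α : Fin (t + 1) → ℝ) (h : Hist S A t) : ℝ :=
  ∏ i, (π' (h i).1 (h i).2 / π (h i).1 (h i).2) ^ (α i)

/-- The prefix of length `t+1` of a history of length `T+1` (for `t ≤ T`). -/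
def pref {T : ℕ} (h : Hist S A T) (t : Fin (T + 1)) : Hist S A (t : ℕ) :=
  fun i => h (Fin.castLE t.isLt i)


/-- One-step backward operator on state-action functions. -/
noncomputable def TT (M : MDP S A) (π : S → A → ℝ) (f : S × A → ℝ) : S × A → ℝ :=
  fun q => ∑ q' : S × A, M.p q.1 q.2 q'.1 * π q'.1 q'.2 * f q'

/-- Generic expectation over histories. -/
noncomputable def GG (M : MDP S A) (π : S → A → ℝ) (c : S × A → ℝ) (t : ℕ) (f : S × A → ℝ) : ℝ :=
  ∑ h : Hist S A t, (c (h 0) * ∏ i : Fin t,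
      (M.p (h i.castSucc).1 (h i.castSucc).2 (h i.succ).1 * π (h i.succ).1 (h i.succ).2))
      * f (h (Fin.last t))

lemma GG_zero (M : MDP S A) (π : S → A → ℝ) (c : S × A → ℝ) (f : S × A → ℝ) :
    GG M π c 0 f = ∑ q, c q * f q := by
  unfold GG
  rw [← (Equiv.funUnique (Fin 1) (S × A)).symm.sum_comp]
  simp [Equiv.funUnique]

lemma GG_succ (M : MDP S A) (π : S → A → ℝ) (c : S × A → ℝ) (t : ℕ) (f : S × A → ℝ) :
    GG M π c (t + 1) f = GG M π c t (TT M π f) := by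
  unfold GG TT
  rw [← (Fin.snocEquiv (fun _ : Fin (t + 2) => S × A)).sum_comp, Fintype.sum_prod_type,
    Finset.sum_comm]
  refine Finset.sum_congr rfl fun h _ => ?_
  rw [Finset.mul_sum]
  refine Finset.sum_congr rfl fun q _ => ?_
  have h0 : (Fin.snoc h q : Fin (t + 2) → S × A) 0 = h 0 := by
    rw [← Fin.castSucc_zero, Fin.snoc_castSucc (α := fun _ => S × A)]
  have e : (Fin.snocEquiv (fun _ : Fin (t + 2) => S × A)) (q, h)
      = (Fin.snoc h q : Fin (t + 2) → S × A) := rfl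
  rw [e, Fin.prod_univ_castSucc, h0]
  simp only [Fin.succ_castSucc, Fin.snoc_castSucc (α := fun _ => S × A), Fin.succ_last,
    Fin.snoc_last (α := fun _ => S × A)]
  ring

lemma GG_iter (M : MDP S A) (π : S → A → ℝ) (c : S × A → ℝ) (t : ℕ) (f : S × A → ℝ) :
    GG M π c t f = ∑ q, c q * ((TT M π)^[t] f) q := by
  induction t generalizing f with
  | zero => simp [GG_zero]
  | succ t ih => rw [GG_succ, ih, Function.iterate_succ_apply]

lemma kern_sum (M : MDP S A) (π : S → A → ℝ) (hπ : IsPolicy π) (q : S × A) :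
    ∑ q' : S × A, M.p q.1 q.2 q'.1 * π q'.1 q'.2 = 1 := by
  rw [Fintype.sum_prod_type]
  simp [← Finset.mul_sum, hπ.2, M.p_sum_one]

lemma TT_bound (M : MDP S A) (π : S → A → ℝ) (hπ : IsPolicy π) (f : S × A → ℝ) (C : ℝ)
    (hf : ∀ q, |f q| ≤ C) (q : S × A) : |TT M π f q| ≤ C := by
  unfold TT
  calc _ ≤ ∑ q' : S × A, |M.p q.1 q.2 q'.1 * π q'.1 q'.2 * f q'| := Finset.abs_sum_le_sum_abs _ _
    _ ≤ ∑ q' : S × A, M.p q.1 q.2 q'.1 * π q'.1 q'.2 * C := by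
        refine Finset.sum_le_sum fun q' _ => ?_
        have h0 : 0 ≤ M.p q.1 q.2 q'.1 * π q'.1 q'.2 :=
          mul_nonneg (M.p_nonneg _ _ _) (hπ.1 _ _)
        rw [abs_mul, abs_of_nonneg h0]
        exact mul_le_mul_of_nonneg_left (hf q') h0
    _ = C := by rw [← Finset.sum_mul, kern_sum M π hπ, one_mul]

lemma iter_bound (M : MDP S A) (π : S → A → ℝ) (hπ : IsPolicy π) (f : S × A → ℝ) (C : ℝ)
    (hf : ∀ q, |f q| ≤ C) (t : ℕ) : ∀ q, |((TT M π)^[t] f) q| ≤ C := by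
  induction t with
  | zero => simpa using hf
  | succ t ih => rw [Function.iterate_succ_apply']; exact TT_bound M π hπ _ C ih

lemma summ_bdd (M : MDP S A) (x : ℕ → ℝ) (C : ℝ) (hx : ∀ t, |x t| ≤ C) :
    Summable fun t => M.γ ^ t * x t := by
  refine Summable.of_norm_bounded
    ((summable_geometric_of_lt_one M.γ_pos.le M.γ_lt_one).mul_right C) fun t => ?_
  have : 0 ≤ M.γ ^ t := pow_nonneg M.γ_pos.le t
  rw [Real.norm_eq_abs, abs_mul, abs_of_nonneg this]
  exact mul_le_mul_of_nonneg_left (hx t) this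

/-- reward as function of pairs -/
def rr (M : MDP S A) : S × A → ℝ := fun q => M.r q.1 q.2

lemma fin_bdd {ι : Type*} [Fintype ι] (f : ι → ℝ) (i : ι) : |f i| ≤ ∑ j, |f j| :=
  Finset.single_le_sum (f := fun j => |f j|) (fun j _ => abs_nonneg _) (Finset.mem_univ i)

lemma iter_summ (M : MDP S A) (π : S → A → ℝ) (hπ : IsPolicy π) (q : S × A) :
    Summable fun t => M.γ ^ t * ((TT M π)^[t] (rr M)) q :=
  summ_bdd M _ _ fun t => iter_bound M π hπ (rr M) _ (fin_bdd (rr M)) t q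

lemma Q_eq (M : MDP S A) (π : S → A → ℝ) (s : S) (a : A) :
    Qval M π s a = ∑' t, M.γ ^ t * ((TT M π)^[t] (rr M)) (s, a) := by
  unfold Qval
  refine tsum_congr fun t => ?_
  congr 1
  have := GG_iter M π (fun q => if q = (s, a) then (1 : ℝ) else 0) t (rr M)
  simp only [ite_mul, one_mul, zero_mul, Finset.sum_ite_eq', Finset.mem_univ, if_true] at this
  rw [← this]
  unfold GG probFrom lastSA rr
  simp only [ite_mul, one_mul, zero_mul]

lemma bellman (M : MDP S A) (π : S → A → ℝ) (hπ : IsPolicy π) (s : S) (a : A) :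
    Qval M π s a = M.r s a + M.γ * ∑ s', M.p s a s' * Vval M π s' := by
  rw [Q_eq, (iter_summ M π hπ (s, a)).tsum_eq_zero_add]
  simp only [pow_zero, Function.iterate_zero, id, one_mul, rr]
  congr 1
  have h1 : ∀ t, M.γ ^ (t + 1) * ((TT M π)^[t + 1] (rr M)) (s, a)
      = ∑ q' : S × A, M.γ * (M.p s a q'.1 * π q'.1 q'.2) *
          (M.γ ^ t * ((TT M π)^[t] (rr M)) q') := by
    intro t
    rw [Function.iterate_succ_apply', TT, Finset.mul_sum]
    refine Finset.sum_congr rfl fun q _ => ?_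
    ring
  rw [tsum_congr h1, Summable.tsum_finsetSum (fun q _ => (iter_summ M π hπ q).mul_left _)]
  simp only [tsum_mul_left]
  rw [Fintype.sum_prod_type, Finset.mul_sum]
  refine Finset.sum_congr rfl fun s' _ => ?_
  unfold Vval
  rw [Finset.mul_sum, Finset.mul_sum]
  refine Finset.sum_congr rfl fun a' _ => ?_
  rw [Q_eq]
  ring

/-- State marginal at time `t`. -/
noncomputable def nu (M : MDP S A) (π : S → A → ℝ) : ℕ → S → ℝ
  | 0 => M.μ0
  | t + 1 => fun s' => ∑ s, nu M π t s * ∑ a, π s a * M.p s a s'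

lemma nu_push (M : MDP S A) (π : S → A → ℝ) (t : ℕ) (g : S → ℝ) :
    ∑ s, nu M π (t + 1) s * g s
      = ∑ s, nu M π t s * ∑ a, π s a * ∑ s', M.p s a s' * g s' := by
  simp only [nu, Finset.sum_mul, Finset.mul_sum]
  rw [Finset.sum_comm]
  refine Finset.sum_congr rfl fun s _ => ?_
  rw [Finset.sum_comm]
  refine Finset.sum_congr rfl fun a _ => Finset.sum_congr rfl fun s' _ => ?_
  ring

lemma nu_nonneg (M : MDP S A) (π : S → A → ℝ) (hπ : IsPolicy π) (t : ℕ) (s : S) :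
    0 ≤ nu M π t s := by
  induction t generalizing s with
  | zero => exact M.μ0_nonneg s
  | succ t ih =>
    exact Finset.sum_nonneg fun s' _ => mul_nonneg (ih s') <|
      Finset.sum_nonneg fun a _ => mul_nonneg (hπ.1 _ _) (M.p_nonneg _ _ _)

lemma nu_sum (M : MDP S A) (π : S → A → ℝ) (hπ : IsPolicy π) (t : ℕ) :
    ∑ s, nu M π t s = 1 := by
  induction t with
  | zero => exact M.μ0_sum_one
  | succ t ih =>
    have := nu_push M π t (fun _ => 1)
    simpa [M.p_sum_one, hπ.2, ih] using this

lemma nu_bdd (M : MDP S A) (π : S → A → ℝ) (hπ : IsPolicy π) (g : S → ℝ) (t : ℕ) :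
    |∑ s, nu M π t s * g s| ≤ ∑ s, |g s| := by
  refine (Finset.abs_sum_le_sum_abs _ _).trans (Finset.sum_le_sum fun s _ => ?_)
  have h1 : nu M π t s ≤ 1 := by
    rw [← nu_sum M π hπ t]
    exact Finset.single_le_sum (fun s _ => nu_nonneg M π hπ t s) (Finset.mem_univ s)
  rw [abs_mul, abs_of_nonneg (nu_nonneg M π hπ t s)]
  exact mul_le_of_le_one_left (abs_nonneg _) h1

lemma nu_summ (M : MDP S A) (π : S → A → ℝ) (hπ : IsPolicy π) (g : S → ℝ) :
    Summable fun t => M.γ ^ t * ∑ s, nu M π t s * g s :=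
  summ_bdd M _ _ (nu_bdd M π hπ g)

lemma GG_nu (M : MDP S A) (π : S → A → ℝ) (t : ℕ) (f : S × A → ℝ) :
    GG M π (fun q => M.μ0 q.1 * π q.1 q.2) t f = ∑ s, nu M π t s * ∑ a, π s a * f (s, a) := by
  induction t generalizing f with
  | zero =>
    rw [GG_zero, Fintype.sum_prod_type]
    simp only [nu, Finset.mul_sum, mul_assoc]
  | succ t ih =>
    rw [GG_succ, ih, nu_push]
    simp only [TT, Fintype.sum_prod_type, Finset.mul_sum, mul_assoc]

lemma eta_nu (M : MDP S A) (π : S → A → ℝ) :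
    ηval M π = ∑' t, M.γ ^ t * ∑ s, nu M π t s * ∑ a, π s a * M.r s a := by
  unfold ηval
  refine tsum_congr fun t => ?_
  exact congrArg _ (GG_nu M π t (rr M))

lemma eta_V (M : MDP S A) (π : S → A → ℝ) (hπ : IsPolicy π) :
    ηval M π = ∑ s, M.μ0 s * Vval M π s := by
  have h1 : ηval M π = ∑' t, ∑ q : S × A, (M.μ0 q.1 * π q.1 q.2) *
      (M.γ ^ t * ((TT M π)^[t] (rr M)) q) := by
    unfold ηval
    refine tsum_congr fun t => ?_
    refine (congrArg _ (GG_iter M π (fun q => M.μ0 q.1 * π q.1 q.2) t (rr M))).trans ?_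
    rw [Finset.mul_sum]
    refine Finset.sum_congr rfl fun q _ => ?_
    ring
  rw [h1, Summable.tsum_finsetSum (fun q _ => (iter_summ M π hπ q).mul_left _)]
  simp only [tsum_mul_left]
  rw [Fintype.sum_prod_type]
  simp only [← Q_eq, Vval, Finset.mul_sum, mul_assoc]

lemma dOcc_nu (M : MDP S A) (π : S → A → ℝ) (hπ : IsPolicy π) (s : S) :
    dOcc M π s = (1 - M.γ) * ∑' t, M.γ ^ t * nu M π t s := by
  unfold dOcc
  congr 1
  refine tsum_congr fun t => congrArg _ ?_
  refine (GG_nu M π t (fun q => if q.1 = s then (1 : ℝ) else 0)).trans ?_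
  simp [← Finset.sum_mul, hπ.2]

lemma Lsur_nu (M : MDP S A) (π π' : S → A → ℝ) (hπ : IsPolicy π) :
    Lsur M π π' = ∑' t, M.γ ^ t * ∑ s, nu M π t s * ∑ a, π' s a * Adv M π s a := by
  have hs : ∀ s, Summable fun t => M.γ ^ t * nu M π t s := fun s => by
    have := nu_summ M π hπ (fun s' => if s' = s then 1 else 0)
    simpa using this
  have hne : 1 - M.γ ≠ 0 := by linarith [M.γ_lt_one] |> fun h : 0 < 1 - M.γ => h.ne'
  have h1 : ∀ t, M.γ ^ t * ∑ s, nu M π t s * ∑ a, π' s a * Adv M π s a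
      = ∑ s, (M.γ ^ t * nu M π t s) * ∑ a, π' s a * Adv M π s a := fun t => by
    rw [Finset.mul_sum]
    exact Finset.sum_congr rfl fun s _ => (mul_assoc _ _ _).symm
  rw [tsum_congr h1, Summable.tsum_finsetSum (fun s _ => (hs s).mul_right _)]
  unfold Lsur
  rw [Finset.mul_sum]
  refine Finset.sum_congr rfl fun s _ => ?_
  rw [tsum_mul_right, dOcc_nu M π hπ]
  field_simp

lemma perf_diff (M : MDP S A) (π π' : S → A → ℝ) (hπ : IsPolicy π) (hπ' : IsPolicy π') :
    ηval M π' - ηval M π = ∑' t, M.γ ^ t * ∑ s, nu M π' t s * ∑ a, π' s a * Adv M π s a := by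
  have hV := nu_summ M π' hπ' (Vval M π)
  have hV1 := (summable_nat_add_iff 1).2 hV
  have hA := nu_summ M π' hπ' (fun s => ∑ a, π' s a * Adv M π s a)
  have key : ∀ t, M.γ ^ t * ∑ s, nu M π' t s * ∑ a, π' s a * M.r s a
      = (M.γ ^ t * ∑ s, nu M π' t s * ∑ a, π' s a * Adv M π s a)
        + ((M.γ ^ t * ∑ s, nu M π' t s * Vval M π s)
        - (M.γ ^ (t + 1) * ∑ s, nu M π' (t + 1) s * Vval M π s)) := by
    intro t
    have hr : ∀ s, ∑ a, π' s a * M.r s a = (∑ a, π' s a * Adv M π s a) + Vval M π s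
        - M.γ * ∑ a, π' s a * ∑ s', M.p s a s' * Vval M π s' := by
      intro s
      have : Vval M π s = ∑ a, π' s a * Vval M π s := by
        rw [← Finset.sum_mul, hπ'.2, one_mul]
      rw [this, Finset.mul_sum, ← Finset.sum_add_distrib, ← Finset.sum_sub_distrib]
      refine Finset.sum_congr rfl fun a _ => ?_
      rw [Adv, bellman M π hπ s a]
      ring
    rw [nu_push]
    simp only [hr, mul_sub, mul_add, Finset.sum_sub_distrib, Finset.sum_add_distrib]
    have : ∑ s, nu M π' t s * (M.γ * ∑ a, π' s a * ∑ s', M.p s a s' * Vval M π s')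
        = M.γ * ∑ s, nu M π' t s * ∑ a, π' s a * ∑ s', M.p s a s' * Vval M π s' := by
      rw [Finset.mul_sum]
      exact Finset.sum_congr rfl fun s _ => by ring
    rw [this]
    ring
  rw [eta_nu M π', tsum_congr key, hA.tsum_add (hV.sub hV1), hV.tsum_sub hV1,
    hV.tsum_eq_zero_add, eta_V M π hπ]
  simp [nu]

lemma Abar (M : MDP S A) (π : S → A → ℝ) (hπ : IsPolicy π) (s : S) :
    ∑ a, π s a * Adv M π s a = 0 := by
  simp only [Adv, mul_sub, Finset.sum_sub_distrib, ← Finset.sum_mul, hπ.2, one_mul]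
  simp [Vval]

lemma nu_diff (M : MDP S A) (π π' : S → A → ℝ) (hπ : IsPolicy π) (hπ' : IsPolicy π')
    (Δ : ℝ) (hΔ : ∀ s, ∑ a, |π' s a - π s a| ≤ 2 * Δ) (t : ℕ) :
    ∑ s, |nu M π' t s - nu M π t s| ≤ t * (2 * Δ) := by
  induction t with
  | zero => simp [nu]
  | succ t ih =>
    have h1 : ∀ s', |nu M π' (t + 1) s' - nu M π (t + 1) s'| ≤
        ∑ s, ∑ a, (|nu M π' t s - nu M π t s| * π' s a + nu M π t s * |π' s a - π s a|)
          * M.p s a s' := by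
      intro s'
      have e : nu M π' (t + 1) s' - nu M π (t + 1) s' =
          ∑ s, ∑ a, ((nu M π' t s - nu M π t s) * π' s a + nu M π t s * (π' s a - π s a))
            * M.p s a s' := by
        simp only [nu, Finset.mul_sum, ← Finset.sum_sub_distrib]
        refine Finset.sum_congr rfl fun s _ => Finset.sum_congr rfl fun a _ => ?_
        ring
      rw [e]
      refine (Finset.abs_sum_le_sum_abs _ _).trans (Finset.sum_le_sum fun s _ => ?_)
      refine (Finset.abs_sum_le_sum_abs _ _).trans (Finset.sum_le_sum fun a _ => ?_)
      rw [abs_mul, abs_of_nonneg (M.p_nonneg s a s')]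
      refine mul_le_mul_of_nonneg_right ?_ (M.p_nonneg _ _ _)
      refine (abs_add_le _ _).trans ?_
      rw [abs_mul, abs_mul, abs_of_nonneg (hπ'.1 s a), abs_of_nonneg (nu_nonneg M π hπ t s)]
    calc _ ≤ ∑ s', ∑ s, ∑ a,
          (|nu M π' t s - nu M π t s| * π' s a + nu M π t s * |π' s a - π s a|)
          * M.p s a s' := Finset.sum_le_sum fun s' _ => h1 s'
      _ = ∑ s, (|nu M π' t s - nu M π t s| + nu M π t s * ∑ a, |π' s a - π s a|) := by
        rw [Finset.sum_comm]
        refine Finset.sum_congr rfl fun s _ => ?_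
        rw [Finset.sum_comm]
        simp only [← Finset.mul_sum, M.p_sum_one, mul_one, Finset.sum_add_distrib, hπ'.2]
      _ ≤ ∑ s, (|nu M π' t s - nu M π t s| + nu M π t s * (2 * Δ)) :=
        Finset.sum_le_sum fun s _ => add_le_add le_rfl
          (mul_le_mul_of_nonneg_left (hΔ s) (nu_nonneg M π hπ t s))
      _ = (∑ s, |nu M π' t s - nu M π t s|) + 2 * Δ := by
        rw [Finset.sum_add_distrib, ← Finset.sum_mul, nu_sum M π hπ, one_mul]
      _ ≤ _ := by push_cast; linarith

/-- TRPO style bound: `|η(π̃) − η(π) − L_π(π̃)| ≤ (4εγ/(1−γ)²) Δ²` with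
`ε = max_{s,a} |A^π(s,a)|` and `Δ = max_s D_TV(π̃(·|s)‖π(·|s))`. -/
theorem surrogate_error_bound_max_TV
    [Nonempty S] [Nonempty A]
    (M : MDP S A) (π π' : S → A → ℝ)
    (hπ : IsPolicy π) (hπ' : IsPolicy π')
    (ε : ℝ)
    (hε : ε = Finset.univ.sup' Finset.univ_nonempty fun q : S × A => |Adv M π q.1 q.2|)
    (Δ : ℝ)
    (hΔ : Δ = Finset.univ.sup' Finset.univ_nonempty fun s => (1 / 2) * ∑ a, |π' s a - π s a|) :
    |ηval M π' - ηval M π - Lsur M π π'| ≤ 4 * ε * M.γ / (1 - M.γ) ^ 2 * Δ ^ 2 := by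
  have hεb : ∀ s a, |Adv M π s a| ≤ ε := fun s a => by
    rw [hε]
    exact Finset.le_sup' (fun q : S × A => |Adv M π q.1 q.2|) (Finset.mem_univ (s, a))
  have hΔb : ∀ s, ∑ a, |π' s a - π s a| ≤ 2 * Δ := fun s => by
    have : (1 / 2) * ∑ a, |π' s a - π s a| ≤ Δ := by
      rw [hΔ]
      exact Finset.le_sup' (fun s => (1 / 2) * ∑ a, |π' s a - π s a|) (Finset.mem_univ s)
    linarith
  have hε0 : 0 ≤ ε :=
    (abs_nonneg _).trans (hεb (Classical.arbitrary S) (Classical.arbitrary A))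
  have hΔ0 : 0 ≤ 2 * Δ :=
    (Finset.sum_nonneg fun a _ => abs_nonneg _).trans (hΔb (Classical.arbitrary S))
  have hAb : ∀ s, |∑ a, π' s a * Adv M π s a| ≤ 2 * Δ * ε := fun s => by
    have e : ∑ a, π' s a * Adv M π s a = ∑ a, (π' s a - π s a) * Adv M π s a := by
      simp only [sub_mul, Finset.sum_sub_distrib, Abar M π hπ s, sub_zero]
    rw [e]
    refine (Finset.abs_sum_le_sum_abs _ _).trans ?_
    refine le_trans (Finset.sum_le_sum (g := fun a => |π' s a - π s a| * ε) fun a _ => ?_) ?_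
    · rw [abs_mul]
      exact mul_le_mul_of_nonneg_left (hεb s a) (abs_nonneg _)
    · rw [← Finset.sum_mul]
      exact mul_le_mul_of_nonneg_right (hΔb s) hε0
  rw [perf_diff M π π' hπ hπ', Lsur_nu M π π' hπ,
    ← (nu_summ M π' hπ' _).tsum_sub (nu_summ M π hπ _)]
  have hγ : ‖M.γ‖ < 1 := by
    rw [Real.norm_eq_abs, abs_of_pos M.γ_pos]; exact M.γ_lt_one
  have hg := (hasSum_coe_mul_geometric_of_norm_lt_one hγ).mul_right (2 * Δ * (2 * Δ * ε))
  have := tsum_of_norm_bounded hg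
    (f := fun t => M.γ ^ t * (∑ s, nu M π' t s * ∑ a, π' s a * Adv M π s a)
      - M.γ ^ t * (∑ s, nu M π t s * ∑ a, π' s a * Adv M π s a)) (fun t => by
    have hp : 0 ≤ M.γ ^ t := pow_nonneg M.γ_pos.le t
    rw [← mul_sub, ← Finset.sum_sub_distrib, Real.norm_eq_abs, abs_mul, abs_of_nonneg hp]
    have : |∑ s, (nu M π' t s * ∑ a, π' s a * Adv M π s a
        - nu M π t s * ∑ a, π' s a * Adv M π s a)| ≤ t * (2 * Δ) * (2 * Δ * ε) := by
      refine (Finset.abs_sum_le_sum_abs _ _).trans ?_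
      refine le_trans (Finset.sum_le_sum
        (g := fun s => |nu M π' t s - nu M π t s| * (2 * Δ * ε)) fun s _ => ?_) ?_
      · rw [← sub_mul, abs_mul]
        exact mul_le_mul_of_nonneg_left (hAb s) (abs_nonneg _)
      · rw [← Finset.sum_mul]
        exact mul_le_mul_of_nonneg_right (nu_diff M π π' hπ hπ' Δ hΔb t) (mul_nonneg hΔ0 hε0)
    calc _ ≤ M.γ ^ t * (t * (2 * Δ) * (2 * Δ * ε)) := mul_le_mul_of_nonneg_left this hp
      _ = _ := by ring)
  rw [Real.norm_eq_abs] at this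
  refine this.trans (le_of_eq ?_)
  ring

end PolicyOpt
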